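/- arXiv:math/0303070 — 3 statements merged into one kernel-verified Lean document; each statement's English description precedes it below -/
import Mathlib

section
/- For a unilateral weighted shift S with positive bounded weights, the local spectrum σ_S(x) is connected for every x ∈ H. -/
/-!
A weighted shift `T` raises the index of every basis vector, so the truncations `P n y` of a
solution of `(T - z) y = x` with `z ≠ 0` are determined by `x` and `z` through a recursion, and they
depend holomorphically on `z ≠ 0`. In particular `T - z` is injective for `z ≠ 0`.

If `σ_T(x)` were disconnected, a nonempty compact relatively clopen piece of it would avoid `0`, and
hence lie in a bounded open set `U` with `0 ∉ closure U` and `frontier U` in the local resolvent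
set. On the compact set `frontier U` the truncations converge uniformly to the local resolvent
function. By the maximum modulus principle they converge uniformly on `U` too, and the limit is a
holomorphic solution there, so that `U` contains no point of `σ_T(x)`.
-/

open Filter

section Defs

variable {X : Type*} [NormedAddCommGroup X] [NormedSpace ℂ X]

/-- The local resolvent set of `T` at `x`. -/
def localResolventSet (T : X →L[ℂ] X) (x : X) : Set ℂ :=
  {μ | ∃ U : Set ℂ, IsOpen U ∧ μ ∈ U ∧ ∃ f : ℂ → X, AnalyticOnNhd ℂ f U ∧
    ∀ z ∈ U, (T - z • (1 : X →L[ℂ] X)) (f z) = x}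

/-- The local spectrum of `T` at `x`. -/
def localSpectrum (T : X →L[ℂ] X) (x : X) : Set ℂ :=
  (localResolventSet T x)ᶜ

end Defs

variable {H : Type*} [NormedAddCommGroup H] [InnerProductSpace ℂ H] [CompleteSpace H]

open Bornology Function Set Topology

section Topology

theorem isPreconnected_of_disjoint_of_disjoint_frontier {α : Type*} [TopologicalSpace α]
    [T2Space α] [LocallyCompactSpace α] {K : Set α} (hK : IsCompact K) (a : α)
    (h : ∀ U, IsOpen U → IsCompact (closure U) → a ∉ closure U →
      Disjoint (frontier U) K → Disjoint U K) :
    IsPreconnected K := by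
  have subset_left (u v : Set α) (hu : IsClosed u) (hv : IsClosed v) (hKuv : K ⊆ u ∪ v)
      (huv : Disjoint u v) (hav : a ∉ v) : K ⊆ u := by
    have hvu : K ∩ v ⊆ (u ∪ {a})ᶜ := by
      rintro z ⟨-, hzv⟩ (hzu | rfl)
      exacts [huv.notMem_of_mem_left hzu hzv, hav hzv]
    obtain ⟨U, hUo, hvU, hUu, hUc⟩ := exists_open_between_and_isCompact_closure
      (hK.inter_right hv) (hu.union isClosed_singleton).isOpen_compl hvu
    have hfrontier : Disjoint (frontier U) K := by
      refine disjoint_left.2 fun z hzU hzK => ?_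
      rw [hUo.frontier_eq] at hzU
      exact (hKuv hzK).elim (fun hzu => hUu hzU.1 (.inl hzu)) fun hzv => hzU.2 (hvU ⟨hzK, hzv⟩)
    have hUK := h U hUo hUc (fun ha => hUu ha (.inr rfl)) hfrontier
    exact fun z hz => (hKuv hz).resolve_right fun hzv => hUK.notMem_of_mem_right hz (hvU ⟨hz, hzv⟩)
  rw [isPreconnected_iff_subset_of_fully_disjoint_closed hK.isClosed]
  intro u v hu hv hKuv huv
  by_cases hav : a ∈ v
  · exact .inr (subset_left v u hv hu (by rwa [union_comm]) huv.symm
      (huv.notMem_of_mem_right hav))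
  · exact .inl (subset_left u v hu hv hKuv huv hav)

theorem tendstoLocallyUniformly_of_equicontinuous {ι α β : Type*} [TopologicalSpace α]
    [UniformSpace β] {p : Filter ι} [p.NeBot] {F : ι → α → β} {f : α → β} (hF : Equicontinuous F)
    (hFf : ∀ x, Tendsto (F · x) p (𝓝 (f x))) :
    TendstoLocallyUniformly F f p := by
  have hf : Continuous f := (tendsto_pi_nhds.2 hFf).continuous_of_equicontinuous hF
  intro u hu x
  obtain ⟨w, hw, -, hwu⟩ := comp_comp_symm_mem_uniformity_sets hu
  have hfx : ∀ᶠ y in 𝓝 x, (f y, f x) ∈ w :=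
    Uniform.continuousAt_iff'_left.1 hf.continuousAt hw
  refine ⟨_, (hF x w hw).and hfx, ?_⟩
  filter_upwards [Uniform.tendsto_nhds_right.1 (hFf x) hw] with n hn y hy
  exact hwu ⟨F n x, ⟨f x, hy.2, hn⟩, hy.1 n⟩

theorem exists_tendstoUniformlyOn_of_uniformCauchySeqOn {ι α β : Type*} [UniformSpace β]
    [CompleteSpace β] {p : Filter ι} [p.NeBot] {F : ι → α → β} {s : Set α}
    (hF : UniformCauchySeqOn F p s) :
    ∃ f, TendstoUniformlyOn F f p s := by
  have hlim (x : α) : ∃ y, x ∈ s → Tendsto (F · x) p (𝓝 y) := by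
    by_cases hx : x ∈ s
    · exact (CompleteSpace.complete (hF.cauchy_map hx)).imp fun _ hy _ => hy
    · exact ⟨F p.nonempty_of_neBot.some x, fun h => absurd h hx⟩
  choose f hf using hlim
  exact ⟨f, hF.tendstoUniformlyOn_of_tendsto hf⟩

end Topology

section NormedSpace

theorem tendstoLocallyUniformly_of_tendsto_apply {𝕜 E F : Type*} [NontriviallyNormedField 𝕜]
    [NormedAddCommGroup E] [NormedSpace 𝕜 E] [CompleteSpace E] [NormedAddCommGroup F]
    [NormedSpace 𝕜 F] {g : ℕ → E →L[𝕜] F} {f : E → F}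
    (hgf : ∀ x, Tendsto (g · x) atTop (𝓝 (f x))) :
    TendstoLocallyUniformly (fun n => ⇑(g n)) f atTop := by
  have hbdd : ∃ C, ∀ n, ‖g n‖ ≤ C := banach_steinhaus fun x =>
    (hgf x).norm.bddAbove_range.imp fun _ hC n => hC (mem_range_self n)
  exact tendstoLocallyUniformly_of_equicontinuous
    (((NormedSpace.equicontinuous_TFAE g).out 5 1).1 hbdd) hgf

theorem uniformCauchySeqOn_closure_of_frontier {ι E F : Type*} [NormedAddCommGroup E]
    [NormedSpace ℂ E] [Nontrivial E] [NormedAddCommGroup F] [NormedSpace ℂ F] {p : Filter ι}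
    {G : ι → E → F} {U : Set E} (hU : IsBounded U) (hG : ∀ n, DiffContOnCl ℂ (G n) U)
    (h : UniformCauchySeqOn G p (frontier U)) :
    UniformCauchySeqOn G p (closure U) := by
  intro u hu
  obtain ⟨ε, hε, hεu⟩ := Metric.uniformity_basis_dist_le.mem_iff.1 hu
  filter_upwards [h _ (Metric.uniformity_basis_dist_le.mem_of_mem hε)] with n hn z hz
  have hfrontier : ∀ w ∈ frontier U, ‖(G n.1 - G n.2) w‖ ≤ ε := fun w hw => by
    simpa [dist_eq_norm] using hn w hw
  refine hεu ?_
  simpa [dist_eq_norm] using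
    Complex.norm_le_of_forall_mem_frontier_norm_le hU ((hG n.1).sub (hG n.2)) hfrontier hz

theorem ext_of_schauderBasis {𝕜 E F : Type*} [NontriviallyNormedField 𝕜]
    [NormedAddCommGroup E] [NormedSpace 𝕜 E] [NormedAddCommGroup F] [NormedSpace 𝕜 F]
    (b : SchauderBasis 𝕜 E) {f g : E →L[𝕜] F} (h : ∀ n, f (b n) = g (b n)) : f = g := by
  ext x
  have hproj (n : ℕ) : f (b.proj n x) = g (b.proj n x) := by
    simp only [SchauderBasis.proj_apply, map_sum, map_smul, h]
  exact tendsto_nhds_unique ((f.continuous.tendsto x).comp (b.tendsto_proj x))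
    (((g.continuous.tendsto x).comp (b.tendsto_proj x)).congr fun n => (hproj n).symm)

end NormedSpace

section LocalSpectrum

variable {X : Type*} [NormedAddCommGroup X] [NormedSpace ℂ X]

theorem isOpen_localResolventSet (T : X →L[ℂ] X) (x : X) : IsOpen (localResolventSet T x) :=
  isOpen_iff_mem_nhds.2 fun _ ⟨U, hU, hzU, hf⟩ =>
    mem_of_superset (hU.mem_nhds hzU) fun _ hw => ⟨U, hU, hw, hf⟩

theorem resolventSet_subset_localResolventSet [CompleteSpace X] (T : X →L[ℂ] X) (x : X) :
    resolventSet ℂ T ⊆ localResolventSet T x := by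
  intro μ hμ
  have hopen := spectrum.isOpen_resolventSet (𝕜 := ℂ) T
  refine ⟨_, hopen, hμ, fun z => -resolvent T z x, ?_, fun z hz => ?_⟩
  · refine DifferentiableOn.analyticOnNhd (fun z hz => ?_) hopen
    have hresolvent := (spectrum.hasDerivAt_resolvent_const_left hz).differentiableAt
    exact (hresolvent.clm_apply (differentiableAt_const x)).neg.differentiableWithinAt
  · have hinv : (algebraMap ℂ (X →L[ℂ] X) z - T) * resolvent T z = 1 :=
      Ring.mul_inverse_cancel _ hz
    calc (T - z • (1 : X →L[ℂ] X)) (-resolvent T z x)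
        = ((algebraMap ℂ (X →L[ℂ] X) z - T) * resolvent T z) x := by
          simp [Algebra.algebraMap_eq_smul_one, neg_add_eq_sub]
      _ = x := by rw [hinv, one_apply_eq_self]

theorem isCompact_localSpectrum [CompleteSpace X] (T : X →L[ℂ] X) (x : X) :
    IsCompact (localSpectrum T x) :=
  (spectrum.isCompact (𝕜 := ℂ) T).of_isClosed_subset (isOpen_localResolventSet T x).isClosed_compl
    (compl_subset_compl.2 (resolventSet_subset_localResolventSet T x))

theorem exists_continuousOn_sub_smul_one_apply_eq {T : X →L[ℂ] X} {x : X} {V : Set ℂ}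
    (hV : IsOpen V) (hinj : ∀ z ∈ V, Injective (T - z • (1 : X →L[ℂ] X))) :
    ∃ f : ℂ → X, ContinuousOn f (localResolventSet T x ∩ V) ∧
      ∀ z ∈ localResolventSet T x, (T - z • (1 : X →L[ℂ] X)) (f z) = x := by
  have hsol : ∀ z ∈ localResolventSet T x, ∃ y, (T - z • (1 : X →L[ℂ] X)) y = x :=
    fun z ⟨_, _, hz, g, _, hg⟩ => ⟨g z, hg z hz⟩
  choose! f hf using hsol
  refine ⟨f, ?_, hf⟩
  rintro z ⟨⟨U, hU, hzU, g, hg, hgx⟩, hzV⟩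
  have hgf : g =ᶠ[𝓝 z] f := by
    filter_upwards [hU.mem_nhds hzU, hV.mem_nhds hzV] with w hwU hwV
    exact hinj w hwV ((hgx w hwU).trans (hf w ⟨U, hU, hwU, g, hg, hgx⟩).symm)
  exact ((hg z hzU).continuousAt.congr hgf).continuousWithinAt

end LocalSpectrum

section StrictlyLowerTriangular

variable {X : Type*} [NormedAddCommGroup X] [NormedSpace ℂ X]

/-- `T` is strictly lower triangular with respect to truncation operators `P n` which start at `0`
and converge pointwise to the identity. When `P n` is the projection onto the first `n` vectors of a
Schauder basis, `truncation_succ_apply` says that the first `n + 1` coordinates of `T y` depend only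
on the first `n` coordinates of `y`. The `P n` are not required to be projections. -/
structure IsStrictlyLowerTriangular (T : X →L[ℂ] X) (P : ℕ → X →L[ℂ] X) : Prop where
  truncation_zero : P 0 = 0
  tendsto_truncation (y : X) : Tendsto (P · y) atTop (𝓝 y)
  truncation_succ_apply (n : ℕ) (y : X) : P (n + 1) (T (P n y)) = P (n + 1) (T y)

/-- The truncation `P n y` of a solution `y` of `(T - z) y = x`, obtained by applying `P (n + 1)` to
`z • y = T y - x`. It is defined even if there is no solution; the value at `z = 0` is junk. -/
noncomputable def truncatedSolution (T : X →L[ℂ] X) (P : ℕ → X →L[ℂ] X) (x : X) : ℕ → ℂ → X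
  | 0, _ => 0
  | n + 1, z => z⁻¹ • P (n + 1) (T (truncatedSolution T P x n z) - x)

theorem differentiableOn_truncatedSolution (T : X →L[ℂ] X) (P : ℕ → X →L[ℂ] X) (x : X) (n : ℕ) :
    DifferentiableOn ℂ (truncatedSolution T P x n) {0}ᶜ := by
  induction n with
  | zero => exact differentiableOn_const 0
  | succ n ih =>
    exact differentiableOn_inv.smul ((P (n + 1)).differentiable.comp_differentiableOn
      ((T.differentiable.comp_differentiableOn ih).sub_const x))

variable {T : X →L[ℂ] X} {P : ℕ → X →L[ℂ] X}

namespace IsStrictlyLowerTriangular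

theorem truncation_eq_truncatedSolution (h : IsStrictlyLowerTriangular T P) {x y : X} {z : ℂ}
    (hz : z ≠ 0) (hy : (T - z • (1 : X →L[ℂ] X)) y = x) (n : ℕ) :
    P n y = truncatedSolution T P x n z := by
  induction n with
  | zero => rw [h.truncation_zero, zero_apply, truncatedSolution]
  | succ n ih =>
    have hzy : T y - x = z • y := by simp [← hy]
    rw [truncatedSolution, ← ih, map_sub, h.truncation_succ_apply, ← map_sub, hzy, map_smul,
      inv_smul_smul₀ hz]

theorem injective_sub_smul_one (h : IsStrictlyLowerTriangular T P) {z : ℂ} (hz : z ≠ 0) :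
    Injective (T - z • (1 : X →L[ℂ] X)) := by
  intro y y' hyy'
  refine tendsto_nhds_unique (h.tendsto_truncation y) ((h.tendsto_truncation y').congr fun n => ?_)
  rw [h.truncation_eq_truncatedSolution hz rfl, h.truncation_eq_truncatedSolution hz hyy']

variable [CompleteSpace X]

theorem sub_smul_one_apply_eq_of_tendsto (h : IsStrictlyLowerTriangular T P) {x y : X} {z : ℂ}
    (hz : z ≠ 0) (hy : Tendsto (truncatedSolution T P x · z) atTop (𝓝 y)) :
    (T - z • (1 : X →L[ℂ] X)) y = x := by
  have hP : TendstoLocallyUniformly (fun n => ⇑(P (n + 1))) id atTop :=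
    tendstoLocallyUniformly_of_tendsto_apply fun w =>
      (h.tendsto_truncation w).comp (tendsto_add_atTop_nat 1)
  have hTy : Tendsto (fun n => T (truncatedSolution T P x n z) - x) atTop (𝓝 (T y - x)) :=
    ((T.continuous.tendsto y).comp hy).sub_const x
  have hfix : y = z⁻¹ • (T y - x) :=
    tendsto_nhds_unique (hy.comp (tendsto_add_atTop_nat 1))
      ((hP.tendsto_comp continuousAt_id hTy).const_smul z⁻¹)
  have hzy : z • y = T y - x := (eq_inv_smul_iff₀ hz).1 hfix
  simp [hzy]

theorem uniformCauchySeqOn_truncatedSolution (h : IsStrictlyLowerTriangular T P) {x : X}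
    {K : Set ℂ} (hK : IsCompact K) (h0 : (0 : ℂ) ∉ K) (hKx : K ⊆ localResolventSet T x) :
    UniformCauchySeqOn (truncatedSolution T P x) atTop K := by
  have hK0 : K ⊆ {0}ᶜ := subset_compl_singleton_iff.2 h0
  obtain ⟨f, hfc, hf⟩ := exists_continuousOn_sub_smul_one_apply_eq (x := x)
    isOpen_compl_singleton fun z hz => h.injective_sub_smul_one hz
  have hPf : TendstoLocallyUniformlyOn (fun n => P n ∘ f) f atTop K :=
    (tendstoLocallyUniformly_of_tendsto_apply h.tendsto_truncation).tendstoLocallyUniformlyOn.comp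
      f (mapsTo_univ f K) (hfc.mono (subset_inter hKx hK0))
  have hsol (n : ℕ) : EqOn (P n ∘ f) (truncatedSolution T P x n) K := fun z hz =>
    h.truncation_eq_truncatedSolution (hK0 hz) (hf z (hKx hz)) n
  exact ((tendstoLocallyUniformlyOn_iff_tendstoUniformlyOn_of_compact hK).1
    (hPf.congr hsol)).uniformCauchySeqOn

theorem subset_localResolventSet_of_frontier_subset (h : IsStrictlyLowerTriangular T P) {x : X}
    {U : Set ℂ} (hUo : IsOpen U) (hUb : IsBounded U) (h0 : (0 : ℂ) ∉ closure U)
    (hUx : frontier U ⊆ localResolventSet T x) :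
    U ⊆ localResolventSet T x := by
  have hU0 : closure U ⊆ {0}ᶜ := subset_compl_singleton_iff.2 h0
  have hfrontier : IsCompact (frontier U) :=
    hUb.isCompact_closure.of_isClosed_subset isClosed_frontier frontier_subset_closure
  have hdiff (n : ℕ) : DifferentiableOn ℂ (truncatedSolution T P x n) (closure U) :=
    (differentiableOn_truncatedSolution T P x n).mono hU0
  have hcauchy : UniformCauchySeqOn (truncatedSolution T P x) atTop (closure U) :=
    uniformCauchySeqOn_closure_of_frontier hUb (fun n => (hdiff n).diffContOnCl)
      (h.uniformCauchySeqOn_truncatedSolution hfrontier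
        (fun h0U => h0 (frontier_subset_closure h0U)) hUx)
  obtain ⟨F, hF⟩ :=
    exists_tendstoUniformlyOn_of_uniformCauchySeqOn (hcauchy.mono subset_closure)
  have hFd : DifferentiableOn ℂ F U := hF.tendstoLocallyUniformlyOn.differentiableOn
    (.of_forall fun n => (hdiff n).mono subset_closure) hUo
  exact fun z hz => ⟨U, hUo, hz, F, hFd.analyticOnNhd hUo, fun w hw =>
    h.sub_smul_one_apply_eq_of_tendsto (hU0 (subset_closure hw)) (hF.tendsto_at hw)⟩

end IsStrictlyLowerTriangular

theorem isStrictlyLowerTriangular_proj_of_weightedShift (b : SchauderBasis ℂ X) {ω : ℕ → ℂ}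
    (hT : ∀ n, T (b n) = ω n • b (n + 1)) : IsStrictlyLowerTriangular T b.proj where
  truncation_zero := b.proj_zero
  tendsto_truncation := b.tendsto_proj
  truncation_succ_apply n y := by
    suffices hcomp : b.proj (n + 1) ∘L T ∘L b.proj n = b.proj (n + 1) ∘L T from
      DFunLike.congr_fun hcomp y
    refine ext_of_schauderBasis b fun i => ?_
    by_cases hi : i < n <;> simp only [ContinuousLinearMap.comp_apply, b.proj_apply_basis_mem, hi,
      hT, map_smul, map_zero, if_true, if_false, Nat.add_lt_add_iff_right, smul_zero]

theorem localSpectrum_connected_general [CompleteSpace X] (h : IsStrictlyLowerTriangular T P)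
    (x : X) : IsPreconnected (localSpectrum T x) := by
  refine isPreconnected_of_disjoint_of_disjoint_frontier (isCompact_localSpectrum T x) 0
    fun U hUo hUc h0 hUx => ?_
  rw [localSpectrum, disjoint_compl_right_iff_subset] at hUx ⊢
  exact h.subset_localResolventSet_of_frontier_subset hUo
    (hUc.isBounded.subset subset_closure) h0 hUx

end StrictlyLowerTriangular

/-- For a unilateral weighted shift `S` with positive bounded weights, the local spectrum
`σ_S(x)` is connected for every `x ∈ H`. -/
theorem localSpectrum_connected (S : H →L[ℂ] H)
    (e : HilbertBasis ℕ ℂ H) (ω : ℕ → ℝ) (hpos : ∀ n, 0 < ω n)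
    (hbd : ∃ M : ℝ, ∀ n, ω n ≤ M)
    (hS : ∀ n, S (e n) = (ω n : ℂ) • e (n + 1))
    (x : H) :
    IsPreconnected (localSpectrum S x) :=
  localSpectrum_connected_general
    (isStrictlyLowerTriangular_proj_of_weightedShift e.toSchauderBasis hS) x
end

section
/- If a unilateral weighted shift S with positive bounded weights satisfies Dunford's condition (C), then r(S) = r₃(S), i.e., the spectral radius equals limsup (ω_0⋯ω_{n-1})^{1/n}. -/
open Filter

section Defs

variable {X : Type*} [NormedAddCommGroup X] [NormedSpace ℂ X]

/-- Dunford's condition (C): every analytic spectral subspace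
`X_T(F) = {x : σ_T(x) ⊆ F}`, `F` closed, is closed. -/
def DunfordConditionC (T : X →L[ℂ] X) : Prop :=
  ∀ F : Set ℂ, IsClosed F → IsClosed {x : X | localSpectrum T x ⊆ F}

end Defs

variable {H : Type*} [NormedAddCommGroup H] [InnerProductSpace ℂ H] [CompleteSpace H]

/-!
For every vector `x` the resolvent series `∑ T ^ n x / z ^ (n + 1)` converges when `‖z‖` exceeds
the local spectral radius `r_T(x) = limsup ‖T ^ n x‖ ^ (1 / n)`, so the local spectrum of `T` at `x`
lies in the closed disc `F` of radius `r_T(x)`. The analytic spectral subspace of `F` is invariant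
under `T`; under condition (C) it is also closed, so if `x` is cyclic it is the whole space. Hence
`T - z` is surjective for all `z` outside `F`. A boundary point of the spectrum cannot have `T - z`
surjective, because a surjective limit of invertible operators is invertible; therefore
`r(T) ≤ r_T(x)`. For a weighted shift, `e 0` is cyclic and its local spectral radius is `r₃`.
-/

open scoped ENNReal

section SurjectiveLimitsOfUnits

variable {𝕜 E : Type*} [NontriviallyNormedField 𝕜] [NormedAddCommGroup E] [NormedSpace 𝕜 E]

lemma norm_inv_le_two_mul_of_preimage_norm_le (u : (E →L[𝕜] E)ˣ) {f : E →L[𝕜] E} {C : ℝ}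
    (hC : 0 ≤ C) (hf : ∀ y, ∃ x, f x = y ∧ ‖x‖ ≤ C * ‖y‖)
    (hu : ‖f - u‖ * C ≤ 1 / 2) : ‖(↑u⁻¹ : E →L[𝕜] E)‖ ≤ 2 * C := by
  set v : E →L[𝕜] E := ↑u⁻¹
  suffices ‖v‖ ≤ C + ‖v‖ * (1 / 2) by linarith
  refine v.opNorm_le_bound (by positivity) fun y ↦ ?_
  obtain ⟨x, rfl, hx⟩ := hf y
  have hvu : v (u.1 x) = x := congr($(u.inv_mul) x)
  calc ‖v (f x)‖ = ‖x + v ((f - u) x)‖ := by simp [hvu]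
    _ ≤ ‖x‖ + ‖v‖ * (‖f - u‖ * ‖x‖) := by
        refine (norm_add_le _ _).trans ?_
        gcongr
        exact v.le_opNorm_of_le ((f - u).le_opNorm x)
    _ ≤ C * ‖f x‖ + ‖v‖ * (‖f - u‖ * (C * ‖f x‖)) := by gcongr
    _ = (C + ‖v‖ * (‖f - u‖ * C)) * ‖f x‖ := by ring
    _ ≤ (C + ‖v‖ * (1 / 2)) * ‖f x‖ := by gcongr

variable [CompleteSpace E]

lemma isUnit_of_surjective_of_mem_closure {f : E →L[𝕜] E} (hf : Function.Surjective f)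
    (hcl : f ∈ closure {g : E →L[𝕜] E | IsUnit g}) : IsUnit f := by
  nontriviality E →L[𝕜] E
  obtain ⟨C, hC, hpre⟩ := f.exists_preimage_norm_le hf
  obtain ⟨_, ⟨u, rfl⟩, hu⟩ := Metric.mem_closure_iff.1 hcl (2 * C)⁻¹ (by positivity)
  rw [dist_eq_norm] at hu
  have hinv : ‖(↑u⁻¹ : E →L[𝕜] E)‖ ≤ 2 * C := by
    refine norm_inv_le_two_mul_of_preimage_norm_le u hC.le hpre ?_
    calc ‖f - u‖ * C ≤ (2 * C)⁻¹ * C := by gcongr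
      _ = 1 / 2 := by field_simp
  have hlt : ‖f - u‖ < ‖(↑u⁻¹ : E →L[𝕜] E)‖⁻¹ :=
    hu.trans_le (inv_anti₀ (Units.norm_pos u⁻¹) hinv)
  exact (u.ofNearby f hlt).isUnit

end SurjectiveLimitsOfUnits

section SpectralRadius

variable {𝕜 : Type*} [RCLike 𝕜]

lemma sub_smul_one_mem_closure_isUnit {A : Type*} [NormedRing A] [NormedAlgebra 𝕜 A] {a : A}
    {z : 𝕜} (hz : spectralRadius 𝕜 a ≤ ‖z‖ₑ) : a - z • 1 ∈ closure {b : A | IsUnit b} := by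
  have hmem : z ∈ closure (Metric.closedBall (0 : 𝕜) ‖z‖)ᶜ := by
    simp [closure_compl, interior_closedBall']
  refine map_mem_closure (f := fun w : 𝕜 ↦ a - w • 1) (by fun_prop) hmem fun w hw ↦ ?_
  have hlt : ‖z‖ₑ < ‖w‖ₑ := by simpa [enorm_eq_nnnorm, ← NNReal.coe_lt_coe] using hw
  have hres := spectrum.mem_resolventSet_of_spectralRadius_lt (hz.trans_lt hlt)
  rw [spectrum.mem_resolventSet_iff, Algebra.algebraMap_eq_smul_one] at hres
  exact IsUnit.sub_iff.1 hres

lemma spectralRadius_le_of_surjective {E : Type*} [NormedAddCommGroup E] [NormedSpace 𝕜 E]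
    [CompleteSpace E] {T : E →L[𝕜] E} {r : ℝ≥0∞}
    (h : ∀ z : 𝕜, r < ‖z‖ₑ → Function.Surjective (T - z • (1 : E →L[𝕜] E))) :
    spectralRadius 𝕜 T ≤ r := by
  by_contra! hlt
  have hne : (spectrum 𝕜 T).Nonempty := by
    by_contra! hempty
    simp [spectralRadius, hempty] at hlt
  obtain ⟨z, hz, hzr⟩ := spectrum.exists_nnnorm_eq_spectralRadius_of_nonempty hne
  have hunit : IsUnit (T - z • (1 : E →L[𝕜] E)) :=
    isUnit_of_surjective_of_mem_closure (h z (hlt.trans_eq hzr.symm))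
      (sub_smul_one_mem_closure_isUnit hzr.ge)
  rw [spectrum.mem_iff, Algebra.algebraMap_eq_smul_one] at hz
  exact hz (IsUnit.sub_iff.1 hunit)

end SpectralRadius

section CyclicVector

variable {R M : Type*} [Semiring R] [AddCommMonoid M] [Module R M] [TopologicalSpace M]

/-- A vector `x` is cyclic for `T` if the linear span of its orbit `x, T x, T² x, …` is dense. -/
def IsCyclicVector (T : M →L[R] M) (x : M) : Prop :=
  Dense (Submodule.span R (Set.range fun n : ℕ ↦ (T ^ n) x) : Set M)

lemma IsCyclicVector.eq_top_of_isClosed {T : M →L[R] M} {x : M} (hx : IsCyclicVector T x)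
    {K : Submodule R M} (hK : IsClosed (K : Set M)) (hTK : ∀ y ∈ K, T y ∈ K) (hxK : x ∈ K) :
    K = ⊤ := by
  have horbit : ∀ n : ℕ, (T ^ n) x ∈ K := by
    intro n
    induction n with
    | zero => simpa using hxK
    | succ n ih => simpa [pow_succ'] using hTK _ ih
  have hspan : Submodule.span R (Set.range fun n : ℕ ↦ (T ^ n) x) ≤ K :=
    Submodule.span_le.2 (Set.range_subset_iff.2 horbit)
  rw [← Submodule.coe_eq_univ, ← hK.closure_eq]
  exact (hx.mono hspan).closure_eq

end CyclicVector

section WeightedShift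

variable {𝕜 M : Type*} [TopologicalSpace M]

lemma pow_apply_zero_of_weightedShift [CommSemiring 𝕜] [AddCommMonoid M] [Module 𝕜 M]
    {T : M →L[𝕜] M} {e : ℕ → M} {w : ℕ → 𝕜} (hT : ∀ n, T (e n) = w n • e (n + 1)) (n : ℕ) :
    (T ^ n) (e 0) = (∏ i ∈ Finset.range n, w i) • e n := by
  induction n with
  | zero => simp
  | succ n ih => simp [pow_succ', ih, hT, smul_smul, Finset.prod_range_succ]

lemma isCyclicVector_zero_of_weightedShift [Field 𝕜] [AddCommGroup M] [Module 𝕜 M]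
    {T : M →L[𝕜] M} {e : ℕ → M} {w : ℕ → 𝕜} (he : Dense (Submodule.span 𝕜 (Set.range e) : Set M))
    (hw : ∀ n, w n ≠ 0) (hT : ∀ n, T (e n) = w n • e (n + 1)) : IsCyclicVector T (e 0) := by
  refine he.mono (Submodule.span_le.2 (Set.range_subset_iff.2 fun n ↦ ?_))
  have hprod : ∏ i ∈ Finset.range n, w i ≠ 0 := Finset.prod_ne_zero_iff.2 fun i _ ↦ hw i
  rw [SetLike.mem_coe, ← Submodule.smul_mem_iff _ hprod, ← pow_apply_zero_of_weightedShift hT]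
  exact Submodule.subset_span ⟨n, rfl⟩

end WeightedShift

variable {X : Type*} [NormedAddCommGroup X] [NormedSpace ℂ X]

section AnalyticSpectralSubspace

lemma surjective_of_forall_mem_localResolventSet {T : X →L[ℂ] X} {z : ℂ}
    (h : ∀ x, z ∈ localResolventSet T x) : Function.Surjective (T - z • (1 : X →L[ℂ] X)) := by
  intro x
  obtain ⟨U, -, hzU, f, -, hf⟩ := h x
  exact ⟨f z, hf z hzU⟩

variable (T : X →L[ℂ] X)

lemma localSpectrum_zero : localSpectrum T 0 = ∅ :=
  Set.compl_empty_iff.2 <| Set.eq_univ_of_forall fun z ↦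
    ⟨Set.univ, isOpen_univ, Set.mem_univ z, 0, analyticOnNhd_const, by simp⟩

lemma localSpectrum_add_subset (x y : X) :
    localSpectrum T (x + y) ⊆ localSpectrum T x ∪ localSpectrum T y := by
  rw [localSpectrum, localSpectrum, localSpectrum, ← Set.compl_inter, Set.compl_subset_compl]
  rintro z ⟨⟨U, hU, hzU, f, hf, hfx⟩, V, hV, hzV, g, hg, hgy⟩
  refine ⟨U ∩ V, hU.inter hV, ⟨hzU, hzV⟩, f + g,
    (hf.mono Set.inter_subset_left).add (hg.mono Set.inter_subset_right), fun w hw ↦ ?_⟩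
  rw [Pi.add_apply, map_add, hfx w hw.1, hgy w hw.2]

lemma localSpectrum_map_subset {T A : X →L[ℂ] X} (h : Commute A T) (x : X) :
    localSpectrum T (A x) ⊆ localSpectrum T x := by
  refine Set.compl_subset_compl.2 ?_
  rintro z ⟨U, hU, hzU, f, hf, hfx⟩
  refine ⟨U, hU, hzU, A ∘ f, A.comp_analyticOnNhd hf, fun w hw ↦ ?_⟩
  have hcomm : Commute A (T - w • 1) := h.sub_right ((Commute.one_right A).smul_right w)
  rw [← hfx w hw]
  exact congr($(hcomm.eq.symm) (f w))

/-- The analytic spectral subspace `X_T(F)`, consisting of the vectors whose local spectrum lies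
in `F`. -/
def analyticSpectralSubspace (F : Set ℂ) : Submodule ℂ X where
  carrier := {x | localSpectrum T x ⊆ F}
  zero_mem' := by simp [localSpectrum_zero]
  add_mem' {x y} hx hy := (localSpectrum_add_subset T x y).trans (Set.union_subset hx hy)
  smul_mem' c x hx :=
    (localSpectrum_map_subset ((Commute.one_left T).smul_left c) x).trans hx

lemma map_mem_analyticSpectralSubspace {F : Set ℂ} {x : X}
    (hx : x ∈ analyticSpectralSubspace T F) : T x ∈ analyticSpectralSubspace T F :=
  (localSpectrum_map_subset (Commute.refl T) x).trans hx

end AnalyticSpectralSubspace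

section VectorPowerSeries

variable (𝕜 : Type*) {E F : Type*} [NontriviallyNormedField 𝕜] [NormedAddCommGroup E]
  [NormedSpace 𝕜 E] [NormedAddCommGroup F] [NormedSpace 𝕜 F]

/-- The power series `∑ w ^ n • a n` in one scalar variable `w`, with coefficients `a n` in `E`. -/
def vectorPowerSeries (a : ℕ → E) : FormalMultilinearSeries 𝕜 𝕜 E :=
  fun n ↦ ContinuousMultilinearMap.mkPiRing 𝕜 (Fin n) (a n)

lemma inv_radius_vectorPowerSeries (a : ℕ → E) :
    (vectorPowerSeries 𝕜 a).radius⁻¹ = atTop.limsup fun n : ℕ ↦ ‖a n‖ₑ ^ ((n : ℝ)⁻¹) := by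
  rw [FormalMultilinearSeries.radius_inv_eq_limsup]
  congr! 2 with n
  rw [ENNReal.coe_rpow_of_nonneg _ (by positivity), one_div, ← enorm_eq_nnnorm,
    vectorPowerSeries, ← ofReal_norm, ContinuousMultilinearMap.norm_mkPiRing, ofReal_norm]

lemma compFormalMultilinearSeries_vectorPowerSeries (f : E →L[𝕜] F) (a : ℕ → E) :
    f.compFormalMultilinearSeries (vectorPowerSeries 𝕜 a) = vectorPowerSeries 𝕜 (f ∘ a) := by
  ext n : 1
  ext
  simp [vectorPowerSeries]

variable {𝕜} in
lemma hasSum_vectorPowerSeries [CompleteSpace E] (a : ℕ → E) {w : 𝕜}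
    (hw : w ∈ Metric.eball 0 (vectorPowerSeries 𝕜 a).radius) :
    HasSum (fun n ↦ w ^ n • a n) ((vectorPowerSeries 𝕜 a).sum w) := by
  simpa [vectorPowerSeries] using (vectorPowerSeries 𝕜 a).hasSum hw

end VectorPowerSeries

section LocalSpectralRadius

/-- The local spectral radius `r_T(x) = limsup ‖T ^ n x‖ ^ (1 / n)`, taken in `ℝ≥0∞` like
Mathlib's `spectralRadius`. -/
noncomputable def localSpectralRadius (T : X →L[ℂ] X) (x : X) : ℝ≥0∞ :=
  atTop.limsup fun n : ℕ ↦ ‖(T ^ n) x‖ₑ ^ ((n : ℝ)⁻¹)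

/-- The power series `∑ w ^ n • T ^ n x`. Its sum `g` satisfies `(1 - w T) (g w) = x`, so that
`z ↦ -z⁻¹ • g z⁻¹` is a local resolvent function of `T` at `x` near infinity. -/
noncomputable def localResolventSeries (T : X →L[ℂ] X) (x : X) : FormalMultilinearSeries ℂ ℂ X :=
  vectorPowerSeries ℂ fun n ↦ (T ^ n) x

variable (T : X →L[ℂ] X) (x : X)

lemma inv_radius_localResolventSeries :
    (localResolventSeries T x).radius⁻¹ = localSpectralRadius T x :=
  inv_radius_vectorPowerSeries ℂ fun n ↦ (T ^ n) x

lemma mem_eball_radius_localResolventSeries_iff {w : ℂ} :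
    w ∈ Metric.eball 0 (localResolventSeries T x).radius ↔ localSpectralRadius T x < ‖w‖ₑ⁻¹ := by
  rw [← inv_radius_localResolventSeries, ENNReal.inv_lt_inv, mem_eball_zero_iff]

variable [CompleteSpace X]

lemma localSpectralRadius_le_spectralRadius :
    localSpectralRadius T x ≤ spectralRadius ℂ T := by
  have hradius : (vectorPowerSeries ℂ fun n ↦ T ^ n).radius⁻¹ = spectralRadius ℂ T := by
    rw [inv_radius_vectorPowerSeries]
    simpa only [one_div] using!
      (spectrum.pow_nnnorm_pow_one_div_tendsto_nhds_spectralRadius T).limsup_eq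
  have heval : (ContinuousLinearMap.apply ℂ X x).compFormalMultilinearSeries
      (vectorPowerSeries ℂ fun n ↦ T ^ n) = localResolventSeries T x :=
    compFormalMultilinearSeries_vectorPowerSeries ℂ _ _
  rw [← inv_radius_localResolventSeries, ← hradius, ← heval]
  exact ENNReal.inv_le_inv.2 (FormalMultilinearSeries.radius_le_radius_continuousLinearMap_comp _ _)

lemma localSpectralRadius_lt_top : localSpectralRadius T x < ∞ :=
  (localSpectralRadius_le_spectralRadius T x).trans_lt <|
    (spectrum.spectralRadius_le_pow_nnnorm_pow_one_div ℂ T 0).trans_lt <| by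
      simp [ENNReal.mul_lt_top]

lemma toReal_localSpectralRadius :
    (localSpectralRadius T x).toReal =
      atTop.limsup fun n : ℕ ↦ ‖(T ^ n) x‖ ^ ((n : ℝ)⁻¹) := by
  obtain ⟨b, hxb, hb⟩ := exists_between (localSpectralRadius_lt_top T x)
  rw [localSpectralRadius, ← ENNReal.limsup_toReal_eq hb.ne
    ((eventually_lt_of_limsup_lt hxb).mono fun _ ↦ le_of_lt)]
  simp only [← ENNReal.toReal_rpow, toReal_enorm]

lemma sum_localResolventSeries_eq_add {w : ℂ}
    (hw : w ∈ Metric.eball 0 (localResolventSeries T x).radius) :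
    (localResolventSeries T x).sum w = x + w • T ((localResolventSeries T x).sum w) := by
  have hsum := hasSum_vectorPowerSeries (fun n ↦ (T ^ n) x) hw
  have hshift : HasSum (fun n ↦ w ^ (n + 1) • (T ^ (n + 1)) x)
      (w • T ((localResolventSeries T x).sum w)) := by
    convert! (hsum.mapL T).const_smul w using 2 with n
    rw [map_smul, smul_smul, pow_succ' w, pow_succ' T, mul_apply_eq_comp]
  have hzero : HasSum (fun n ↦ w ^ n • (T ^ n) x)
      (x + w • T ((localResolventSeries T x).sum w)) := by
    simpa using HasSum.zero_add (f := fun n ↦ w ^ n • (T ^ n) x) hshift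
  exact hsum.unique hzero

lemma mem_localResolventSet_of_localSpectralRadius_lt {z : ℂ}
    (hz : localSpectralRadius T x < ‖z‖ₑ) : z ∈ localResolventSet T x := by
  set p := localResolventSeries T x
  have hne {w : ℂ} (hw : localSpectralRadius T x < ‖w‖ₑ) : w ≠ 0 :=
    enorm_ne_zero.1 hw.ne_bot
  have hball {w : ℂ} (hw : localSpectralRadius T x < ‖w‖ₑ) :
      w⁻¹ ∈ Metric.eball 0 p.radius := by
    rwa [mem_eball_radius_localResolventSeries_iff, enorm_inv (hne hw), inv_inv]
  refine ⟨{w | localSpectralRadius T x < ‖w‖ₑ}, isOpen_lt continuous_const continuous_enorm, hz,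
    fun w ↦ -w⁻¹ • p.sum w⁻¹, fun w hw ↦ ?_, fun w hw ↦ ?_⟩
  · have hinv : AnalyticAt ℂ (fun w : ℂ ↦ w⁻¹) w := analyticAt_inv (hne hw)
    exact hinv.neg.smul ((p.analyticOnNhd _ (hball hw)).fun_comp hinv)
  · have hsum := sum_localResolventSeries_eq_add T x (hball hw)
    calc (T - w • (1 : X →L[ℂ] X)) (-w⁻¹ • p.sum w⁻¹) = p.sum w⁻¹ - w⁻¹ • T (p.sum w⁻¹) := by
          rw [sub_apply, map_smul, smul_apply, one_apply_eq_self, smul_smul, mul_neg,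
            mul_inv_cancel₀ (hne hw), neg_smul, neg_smul, one_smul, sub_neg_eq_add, neg_add_eq_sub]
      _ = x := sub_eq_of_eq_add hsum

lemma localSpectrum_subset_setOf_enorm_le :
    localSpectrum T x ⊆ {z | ‖z‖ₑ ≤ localSpectralRadius T x} := fun _ hz ↦
  not_lt.1 fun hlt ↦ hz (mem_localResolventSet_of_localSpectralRadius_lt T x hlt)

end LocalSpectralRadius

section DunfordConditionC

variable {T : X →L[ℂ] X} {x : X}

lemma DunfordConditionC.analyticSpectralSubspace_eq_top (hC : DunfordConditionC T)
    (hx : IsCyclicVector T x) {F : Set ℂ} (hF : IsClosed F) (hxF : localSpectrum T x ⊆ F) :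
    analyticSpectralSubspace T F = ⊤ :=
  hx.eq_top_of_isClosed (hC F hF) (fun _ ↦ map_mem_analyticSpectralSubspace T) hxF

theorem DunfordConditionC.spectralRadius_eq_localSpectralRadius [CompleteSpace X]
    (hC : DunfordConditionC T) (hx : IsCyclicVector T x) :
    spectralRadius ℂ T = localSpectralRadius T x := by
  refine (spectralRadius_le_of_surjective fun z hz ↦ ?_).antisymm
    (localSpectralRadius_le_spectralRadius T x)
  have htop : analyticSpectralSubspace T {z | ‖z‖ₑ ≤ localSpectralRadius T x} = ⊤ :=
    hC.analyticSpectralSubspace_eq_top hx (isClosed_le continuous_enorm continuous_const)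
      (localSpectrum_subset_setOf_enorm_le T x)
  refine surjective_of_forall_mem_localResolventSet fun y ↦ ?_
  have hy : localSpectrum T y ⊆ {z | ‖z‖ₑ ≤ localSpectralRadius T x} :=
    htop.ge (Submodule.mem_top (x := y))
  exact Set.notMem_compl_iff.1 fun hzy ↦ hz.not_ge (hy hzy)

end DunfordConditionC

theorem dunfordC_implies_r_eq_r₃_general [CompleteSpace X] (S : X →L[ℂ] X) (e : ℕ → X)
    (he : ∀ n, ‖e n‖ = 1) (hspan : Dense (Submodule.span ℂ (Set.range e) : Set X)) (ω : ℕ → ℂ)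
    (hω : ∀ n, ω n ≠ 0) (hS : ∀ n, S (e n) = ω n • e (n + 1)) (hC : DunfordConditionC S) :
    (spectralRadius ℂ S).toReal =
      atTop.limsup fun n : ℕ ↦ (∏ i ∈ Finset.range n, ‖ω i‖) ^ ((n : ℝ)⁻¹) := by
  have hcyclic : IsCyclicVector S (e 0) := isCyclicVector_zero_of_weightedShift hspan hω hS
  have hnorm (n : ℕ) : ‖(S ^ n) (e 0)‖ = ∏ i ∈ Finset.range n, ‖ω i‖ := by
    rw [pow_apply_zero_of_weightedShift hS, norm_smul, he, mul_one, norm_prod]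
  rw [hC.spectralRadius_eq_localSpectralRadius hcyclic, toReal_localSpectralRadius]
  simp only [hnorm]

/-- If a unilateral weighted shift with positive bounded weights satisfies Dunford's
condition (C), then its spectral radius equals `r₃(S) = limsup (ω 0 ⋯ ω (n-1))^(1/n)`. -/
theorem dunfordC_implies_r_eq_r₃ (S : H →L[ℂ] H)
    (e : HilbertBasis ℕ ℂ H) (ω : ℕ → ℝ) (hpos : ∀ n, 0 < ω n)
    (hbd : ∃ M : ℝ, ∀ n, ω n ≤ M)
    (hS : ∀ n, S (e n) = (ω n : ℂ) • e (n + 1))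
    (hC : DunfordConditionC S) :
    (spectralRadius ℂ S).toReal =
      atTop.limsup fun n : ℕ => (∏ i ∈ Finset.range n, ω i) ^ ((n : ℝ)⁻¹) := by
  simpa [abs_of_pos (hpos _)] using dunfordC_implies_r_eq_r₃_general S e e.orthonormal.1
    (Submodule.dense_iff_topologicalClosure_eq_top.2 e.dense_span) (fun n ↦ (ω n : ℂ))
    (fun n ↦ Complex.ofReal_ne_zero.2 (hpos n).ne') hS hC
end

section
/- If a bilateral weighted shift S with positive bounded weights satisfies Dunford's condition (C), then r₂⁻(S) ≤ r₃⁺(S), σ(S) ⊆ {λ : r₂⁻(S) ≤ |λ| ≤ r₃⁺(S)}, and hence r₃⁺(S) = r(S); moreover, if S is invertible then r₂⁻(S) = 1/r(S⁻¹), and if S is not invertible then r₂⁻(S) = 0. -/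
open Filter

variable {H : Type*} [NormedAddCommGroup H] [InnerProductSpace ℂ H] [CompleteSpace H]

/-!
Condition (C) passes from a spanning set to the whole space: if the local spectra of all basis
vectors lie in a closed set `F`, then so do all local spectra. Power series show that the local
spectrum of a basis vector of a bilateral weighted shift lies in the annulus `r₂⁻ ≤ |μ| ≤ r₃⁺`, so
this holds for every vector. Since `T - μ` is not surjective at a boundary point `μ` of the
spectrum, some local spectrum is nonempty, and hence `r₂⁻ ≤ r₃⁺`. Outside the annulus `T - μ` is
surjective, so a point of the spectrum there would be an eigenvalue; but the coordinates of an
eigenvector with eigenvalue `μ` force `r₃⁺ ≤ |μ| ≤ r₂⁻`. The statements on spectral radii follow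
from `σ(S)` lying in the annulus and the growth of `Sⁿe₀` and `S⁻ⁿe₀`.
-/

open Asymptotics Topology

section RootGrowth

variable {u : ℕ → ℝ} {q : ℝ}

theorem tendsto_const_mul_pow_root {C : ℝ} (hC : 0 < C) (hq : 0 ≤ q) :
    Tendsto (fun n : ℕ => (C * q ^ n) ^ (n : ℝ)⁻¹) atTop (𝓝 q) := by
  have hroot : Tendsto (fun n : ℕ => C ^ (n : ℝ)⁻¹) atTop (𝓝 1) := by
    simpa only [Real.rpow_zero, Function.comp_def] using
      (Real.continuousAt_const_rpow hC.ne').tendsto.comp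
        (tendsto_inv_atTop_nhds_zero_nat (𝕜 := ℝ))
  have hlim := hroot.mul_const q
  rw [one_mul] at hlim
  refine hlim.congr' ?_
  filter_upwards [eventually_ne_atTop 0] with n hn
  rw [Real.mul_rpow hC.le (pow_nonneg hq n), Real.pow_rpow_inv_natCast hq hn]

theorem exists_eventually_root_le_of_isBigO_pow (hu : ∀ n, 0 ≤ u n) (hq : 0 ≤ q)
    (h : u =O[atTop] fun n => q ^ n) :
    ∃ C > 0, ∀ᶠ n : ℕ in atTop, u n ^ (n : ℝ)⁻¹ ≤ (C * q ^ n) ^ (n : ℝ)⁻¹ := by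
  obtain ⟨C, hC, hbound⟩ := h.exists_pos
  refine ⟨C, hC, hbound.bound.mono fun n hn => Real.rpow_le_rpow (hu n) ?_ (by positivity)⟩
  rwa [Real.norm_of_nonneg (hu n), Real.norm_of_nonneg (pow_nonneg hq n)] at hn

theorem isBoundedUnder_le_root_of_isBigO_pow (hu : ∀ n, 0 ≤ u n) (hq : 0 ≤ q)
    (h : u =O[atTop] fun n => q ^ n) :
    IsBoundedUnder (· ≤ ·) atTop fun n : ℕ => u n ^ (n : ℝ)⁻¹ := by
  obtain ⟨C, hC, hle⟩ := exists_eventually_root_le_of_isBigO_pow hu hq h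
  exact (tendsto_const_mul_pow_root hC hq).isBoundedUnder_le.mono_le hle

theorem isBoundedUnder_ge_root (hu : ∀ n, 0 ≤ u n) :
    IsBoundedUnder (· ≥ ·) atTop fun n : ℕ => u n ^ (n : ℝ)⁻¹ :=
  isBoundedUnder_of ⟨0, fun n => Real.rpow_nonneg (hu n) _⟩

theorem limsup_root_le_of_isBigO_pow (hu : ∀ n, 0 ≤ u n) (hq : 0 ≤ q)
    (h : u =O[atTop] fun n => q ^ n) :
    atTop.limsup (fun n : ℕ => u n ^ (n : ℝ)⁻¹) ≤ q := by
  obtain ⟨C, hC, hle⟩ := exists_eventually_root_le_of_isBigO_pow hu hq h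
  have hlim := tendsto_const_mul_pow_root hC hq
  rw [← hlim.limsup_eq]
  exact limsup_le_limsup hle (isBoundedUnder_ge_root hu).isCoboundedUnder_le
    hlim.isBoundedUnder_le

theorem le_liminf_root_of_pow_isBigO (hu : ∀ n, 0 ≤ u n) (hq : 0 ≤ q)
    (hbdd : IsBoundedUnder (· ≤ ·) atTop fun n : ℕ => u n ^ (n : ℝ)⁻¹)
    (h : (fun n => q ^ n) =O[atTop] u) :
    q ≤ atTop.liminf fun n : ℕ => u n ^ (n : ℝ)⁻¹ := by
  obtain ⟨C, hC, hbound⟩ := h.exists_pos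
  have hlim := tendsto_const_mul_pow_root (inv_pos.2 hC) hq
  rw [← hlim.liminf_eq]
  refine liminf_le_liminf (hbound.bound.mono fun n hn => ?_) hlim.isBoundedUnder_ge
    hbdd.isCoboundedUnder_ge
  rw [Real.norm_of_nonneg (hu n), Real.norm_of_nonneg (pow_nonneg hq n)] at hn
  exact Real.rpow_le_rpow (by positivity) ((inv_mul_le_iff₀ hC).2 hn) (by positivity)

theorem isBigO_pow_of_limsup_root_lt (hu : ∀ n, 0 ≤ u n)
    (hbdd : IsBoundedUnder (· ≤ ·) atTop fun n : ℕ => u n ^ (n : ℝ)⁻¹)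
    (h : atTop.limsup (fun n : ℕ => u n ^ (n : ℝ)⁻¹) < q) :
    u =O[atTop] fun n => q ^ n := by
  refine IsBigO.of_norm_eventuallyLE ?_
  filter_upwards [eventually_lt_of_limsup_lt h hbdd, eventually_ne_atTop 0] with n hn hn0
  rw [Real.norm_of_nonneg (hu n), ← Real.rpow_inv_natCast_pow (hu n) hn0]
  exact pow_le_pow_left₀ (Real.rpow_nonneg (hu n) _) hn.le n

theorem pow_isBigO_of_lt_liminf_root (hu : ∀ n, 0 ≤ u n) (hq : 0 ≤ q)
    (h : q < atTop.liminf fun n : ℕ => u n ^ (n : ℝ)⁻¹) :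
    (fun n => q ^ n) =O[atTop] u := by
  refine IsBigO.of_norm_eventuallyLE ?_
  filter_upwards [eventually_lt_of_lt_liminf h (isBoundedUnder_ge_root hu),
    eventually_ne_atTop 0] with n hn hn0
  rw [Real.norm_of_nonneg (pow_nonneg hq n), ← Real.rpow_inv_natCast_pow (hu n) hn0]
  exact pow_le_pow_left₀ hq hn.le n

end RootGrowth

section SpectralRadius

theorem spectralRadius_toReal_le {𝕜 A : Type*} [NormedField 𝕜] [Ring A] [Algebra 𝕜 A] {a : A}
    {r : ℝ} (hr : 0 ≤ r) (h : ∀ k ∈ spectrum 𝕜 a, ‖k‖ ≤ r) :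
    (spectralRadius 𝕜 a).toReal ≤ r := by
  refine ENNReal.toReal_le_of_le_ofReal hr (iSup₂_le fun k hk => ?_)
  rw [← enorm_eq_nnnorm, ← ofReal_norm]
  exact ENNReal.ofReal_le_ofReal (h k hk)

variable {A : Type*} [NormedRing A] [NormedAlgebra ℂ A] [CompleteSpace A] {r : ℝ}

theorem spectralRadius_ne_top (a : A) : spectralRadius ℂ a ≠ ⊤ := by
  rcases subsingleton_or_nontrivial A with _ | _
  · simp only [spectrum.SpectralRadius.of_subsingleton, ne_eq, ENNReal.zero_ne_top,
      not_false_eq_true]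
  · obtain ⟨k, -, hk⟩ := spectrum.exists_nnnorm_eq_spectralRadius a
    exact hk ▸ ENNReal.coe_ne_top

theorem isBigO_pow_of_spectralRadius_lt {a : A} (h : (spectralRadius ℂ a).toReal < r) :
    (fun n => a ^ n) =O[atTop] fun n => r ^ n := by
  have hr : 0 < r := ENNReal.toReal_nonneg.trans_lt h
  rw [← ENNReal.lt_ofReal_iff_toReal_lt (spectralRadius_ne_top a)] at h
  refine IsBigO.of_norm_eventuallyLE ?_
  filter_upwards [(spectrum.pow_norm_pow_one_div_tendsto_nhds_spectralRadius a).eventually_lt_const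
    h, eventually_ne_atTop 0] with n hn hn0
  rw [ENNReal.ofReal_lt_ofReal_iff hr, one_div] at hn
  rw [← Real.rpow_inv_natCast_pow (norm_nonneg (a ^ n)) hn0]
  exact pow_le_pow_left₀ (by positivity) hn.le n

theorem le_one_div_spectralRadius_inv [Nontrivial A] {u : Aˣ}
    (h : ∀ k ∈ spectrum ℂ (u : A), r ≤ ‖k‖) :
    r ≤ 1 / (spectralRadius ℂ (↑u⁻¹ : A)).toReal := by
  obtain ⟨k, hk, hρ⟩ := spectrum.exists_nnnorm_eq_spectralRadius (↑u⁻¹ : A)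
  have hk_inv : k⁻¹ ∈ spectrum ℂ (u : A) := by
    rwa [← spectrum.inv₀_mem_inv_iff, inv_inv]
  simpa only [← hρ, ENNReal.coe_toReal, coe_nnnorm, one_div, norm_inv] using h _ hk_inv

end SpectralRadius

section SurjectivitySpectrum

variable {𝕜 X : Type*} [NontriviallyNormedField 𝕜] [NormedAddCommGroup X] [NormedSpace 𝕜 X]

theorem injective_of_exists_preimage_norm_le {A R : X →L[𝕜] X} {c : 𝕜} {C : ℝ} (hC : 0 ≤ C)
    (hA : ∀ y, ∃ x, A x = y ∧ ‖x‖ ≤ C * ‖y‖) (hR : R * (A + c • 1) = 1) (hc : ‖c‖ * C < 1 / 2) :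
    Function.Injective A := by
  have hRA : ∀ x, R (A x) = x - c • R x := fun x => by
    have h : R (A x + c • x) = x := by simpa using DFunLike.congr_fun hR x
    rwa [map_add, map_smul, ← eq_sub_iff_add_eq] at h
  have hRx : ∀ x, ‖c • R x‖ ≤ ‖c‖ * ‖R‖ * ‖x‖ := fun x => by
    rw [norm_smul, mul_assoc]
    gcongr
    exact R.le_opNorm x
  have hR_norm : ‖R‖ ≤ C * (1 + ‖c‖ * ‖R‖) := by
    refine R.opNorm_le_bound (by positivity) fun y => ?_
    obtain ⟨x, rfl, hx⟩ := hA y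
    calc ‖R (A x)‖ = ‖x - c • R x‖ := by rw [hRA]
      _ ≤ ‖x‖ + ‖c‖ * ‖R‖ * ‖x‖ := (norm_sub_le _ _).trans (by gcongr; exact hRx x)
      _ = (1 + ‖c‖ * ‖R‖) * ‖x‖ := by ring
      _ ≤ (1 + ‖c‖ * ‖R‖) * (C * ‖A x‖) := by gcongr
      _ = C * (1 + ‖c‖ * ‖R‖) * ‖A x‖ := by ring
  have hsmall : ‖c‖ * ‖R‖ < 1 := by
    nlinarith [mul_le_mul_of_nonneg_left hR_norm (norm_nonneg c),
      mul_nonneg (norm_nonneg c) (norm_nonneg R)]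
  refine (injective_iff_map_eq_zero _).2 fun x hx => ?_
  have hx_eq : x = c • R x := by
    rw [← sub_eq_zero, ← hRA, hx, map_zero]
  have hx_le := hRx x
  rw [← hx_eq] at hx_le
  by_contra hx0
  nlinarith [norm_pos_iff.2 hx0]

variable [CompleteSpace X]

theorem mem_resolventSet_iff_bijective {T : X →L[𝕜] X} {μ : 𝕜} :
    μ ∈ resolventSet 𝕜 T ↔ Function.Bijective (T - μ • (1 : X →L[𝕜] X)) := by
  rw [spectrum.mem_resolventSet_iff, IsUnit.sub_iff, Algebra.algebraMap_eq_smul_one,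
    ContinuousLinearMap.isUnit_iff_bijective]

/- `T - μ` differs from invertible operators `T - ν` by arbitrarily small multiples of the identity,
so if it were surjective the open mapping theorem would make it injective too. -/
theorem not_surjective_of_mem_frontier_spectrum {T : X →L[𝕜] X} {μ : 𝕜}
    (hμ : μ ∈ frontier (spectrum 𝕜 T)) :
    ¬ Function.Surjective (T - μ • (1 : X →L[𝕜] X)) := by
  intro hsurj
  obtain ⟨C, hC, hpre⟩ := ContinuousLinearMap.exists_preimage_norm_le _ hsurj
  obtain ⟨ν, hν, hdist⟩ := Metric.mem_closure_iff.1
    (frontier_eq_closure_inter_closure.subset hμ).2 (2 * C)⁻¹ (by positivity)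
  rw [dist_eq_norm, ← one_div, lt_div_iff₀ (by positivity)] at hdist
  obtain ⟨u, hu⟩ : IsUnit (T - ν • (1 : X →L[𝕜] X)) :=
    ContinuousLinearMap.isUnit_iff_bijective.2
      (mem_resolventSet_iff_bijective.1 (Set.notMem_compl_iff.1 hν))
  have hleft : ↑u⁻¹ * (T - μ • (1 : X →L[𝕜] X) + (μ - ν) • 1) = 1 := by
    rw [sub_smul, sub_add_sub_cancel, ← hu, u.inv_mul]
  have hinj := injective_of_exists_preimage_norm_le hC.le hpre hleft (by linarith)
  exact (spectrum.isClosed T).frontier_subset hμ (mem_resolventSet_iff_bijective.2 ⟨hinj, hsurj⟩)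

end SurjectivitySpectrum

section PowerSeries

variable {X : Type*} [NormedAddCommGroup X] [NormedSpace ℂ X] [CompleteSpace X]
  {v : ℕ → X} {q : ℝ}

theorem summable_pow_smul_of_isBigO_pow (hq : 0 < q) (hv : v =O[atTop] fun n => q ^ n) {z : ℂ}
    (hz : ‖z‖ < q⁻¹) : Summable fun n => z ^ n • v n := by
  have hratio : ‖z‖ * q < 1 := by rwa [← lt_div_iff₀ hq, one_div]
  refine summable_of_isBigO_nat (summable_geometric_of_lt_one (by positivity) hratio) ?_
  simpa only [mul_pow, norm_pow, smul_eq_mul] using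
    (isBigO_refl (fun n => z ^ n) atTop).norm_right.smul hv

theorem analyticOnNhd_tsum_pow_smul_of_isBigO_pow (hq : 0 < q)
    (hv : v =O[atTop] fun n => q ^ n) :
    AnalyticOnNhd ℂ (fun z : ℂ => ∑' n, z ^ n • v n) {z | ‖z‖ < q⁻¹} := by
  let p : FormalMultilinearSeries ℂ ℂ X := fun n =>
    ContinuousMultilinearMap.mkPiRing ℂ (Fin n) (v n)
  have hsum : p.sum = fun z : ℂ => ∑' n, z ^ n • v n := by
    ext z
    simp [p, FormalMultilinearSeries.sum]
  have hradius : ENNReal.ofReal q⁻¹ ≤ p.radius := by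
    refine p.le_radius_of_isBigO ?_
    rw [Real.coe_toNNReal _ (by positivity)]
    simp only [p, ContinuousMultilinearMap.norm_mkPiRing]
    refine (hv.norm_left.mul (isBigO_refl (fun n => q⁻¹ ^ n) atTop)).congr_right fun n => ?_
    rw [← mul_pow, mul_inv_cancel₀ hq.ne', one_pow]
  have hpos : 0 < p.radius := (ENNReal.ofReal_pos.2 (inv_pos.2 hq)).trans_le hradius
  rw [← hsum]
  refine (p.hasFPowerSeriesOnBall hpos).analyticOnNhd.mono fun z hz => ?_
  rw [Metric.mem_eball, edist_zero_right, ← ofReal_norm]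
  exact (ENNReal.ofReal_lt_ofReal_iff (inv_pos.2 hq)).2 hz |>.trans_le hradius

end PowerSeries

section LocalSpectrum

variable {X : Type*} [NormedAddCommGroup X] [NormedSpace ℂ X] {T : X →L[ℂ] X}

theorem localResolventSet_zero (T : X →L[ℂ] X) : localResolventSet T 0 = Set.univ :=
  Set.eq_univ_of_forall fun _ =>
    ⟨Set.univ, isOpen_univ, trivial, 0, analyticOnNhd_const, fun _ _ => map_zero _⟩

theorem localResolventSet_inter_subset_add (T : X →L[ℂ] X) (x y : X) :
    localResolventSet T x ∩ localResolventSet T y ⊆ localResolventSet T (x + y) := by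
  rintro μ ⟨⟨U, hU, hμU, f, hf, hfx⟩, V, hV, hμV, g, hg, hgy⟩
  refine ⟨U ∩ V, hU.inter hV, ⟨hμU, hμV⟩, f + g, fun z hz => (hf z hz.1).add (hg z hz.2),
    fun z hz => ?_⟩
  rw [Pi.add_apply, map_add, hfx z hz.1, hgy z hz.2]

theorem localResolventSet_subset_of_commute {B : X →L[ℂ] X} (h : Commute B T) (x : X) :
    localResolventSet T x ⊆ localResolventSet T (B x) := by
  rintro μ ⟨U, hU, hμU, f, hf, hfx⟩
  refine ⟨U, hU, hμU, B ∘ f, fun z hz => (B.analyticAt _).comp (hf z hz), fun z hz => ?_⟩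
  have hcomm : Commute B (T - z • 1) := h.sub_right ((Commute.one_right B).smul_right z)
  rw [Function.comp_apply, ← mul_apply_eq_comp, ← hcomm.eq,
    mul_apply_eq_comp, hfx z hz]

theorem localResolventSet_subset_smul (c : ℂ) (x : X) :
    localResolventSet T x ⊆ localResolventSet T (c • x) :=
  localResolventSet_subset_of_commute (B := c • 1) ((Commute.one_left T).smul_left c) x

theorem localResolventSet_smul {c : ℂ} (hc : c ≠ 0) (x : X) :
    localResolventSet T (c • x) = localResolventSet T x := by
  refine (localResolventSet_subset_smul c x).antisymm' ?_
  simpa only [inv_smul_smul₀ hc] using localResolventSet_subset_smul (T := T) c⁻¹ (c • x)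

theorem localResolventSet_apply_diff_zero_subset (T : X →L[ℂ] X) (x : X) :
    localResolventSet T (T x) \ {0} ⊆ localResolventSet T x := by
  rintro μ ⟨⟨U, hU, hμU, f, hf, hfx⟩, hμ⟩
  refine ⟨U \ {0}, hU.sdiff isClosed_singleton, ⟨hμU, hμ⟩, fun z => z⁻¹ • (f z - x),
    fun z hz => (analyticAt_inv hz.2).smul ((hf z hz.1).sub analyticAt_const), fun z hz => ?_⟩
  have hz0 : z ≠ 0 := hz.2
  rw [map_smul, map_sub, hfx z hz.1]
  simp [smul_smul, hz0]

/-- The local spectral subspace `H_T(F)` of vectors whose local spectrum lies in `F`. -/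
def localSpectralSubspace (T : X →L[ℂ] X) (F : Set ℂ) : Submodule ℂ X where
  carrier := {x | localSpectrum T x ⊆ F}
  zero_mem' := by
    simp only [Set.mem_ofPred_eq, localSpectrum, localResolventSet_zero, Set.compl_univ,
      Set.empty_subset]
  add_mem' {x y} hx hy := by
    refine (Set.compl_subset_compl.2 (localResolventSet_inter_subset_add T x y)).trans ?_
    rw [Set.compl_inter]
    exact Set.union_subset hx hy
  smul_mem' c x hx :=
    (Set.compl_subset_compl.2 (localResolventSet_subset_smul c x)).trans hx

theorem DunfordConditionC.localSpectrum_subset_of_span_dense (hT : DunfordConditionC T)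
    {F : Set ℂ} (hF : IsClosed F) {s : Set X} (hs : (Submodule.span ℂ s).topologicalClosure = ⊤)
    (hsF : ∀ x ∈ s, localSpectrum T x ⊆ F) (x : X) : localSpectrum T x ⊆ F := by
  have hle : (Submodule.span ℂ s).topologicalClosure ≤ localSpectralSubspace T F :=
    Submodule.topologicalClosure_minimal _ (Submodule.span_le.2 hsF) (hT F hF)
  exact hle (hs ▸ Submodule.mem_top)

theorem surjective_of_forall_notMem_localSpectrum {μ : ℂ} (h : ∀ x, μ ∉ localSpectrum T x) :
    Function.Surjective (T - μ • (1 : X →L[ℂ] X)) := by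
  intro x
  obtain ⟨U, -, hμU, f, -, hfx⟩ := Set.notMem_compl_iff.1 (h x)
  exact ⟨f μ, hfx μ hμU⟩

variable [CompleteSpace X]

theorem exists_mem_localSpectrum [Nontrivial X] (T : X →L[ℂ] X) :
    ∃ x μ, μ ∈ localSpectrum T x := by
  have hne_univ : spectrum ℂ T ≠ Set.univ := fun h =>
    noncompact_univ ℂ (h ▸ spectrum.isCompact T)
  obtain ⟨μ, hμ⟩ := nonempty_frontier_iff.2 ⟨spectrum.nonempty T, hne_univ⟩
  by_contra! h
  exact not_surjective_of_mem_frontier_spectrum hμ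
    (surjective_of_forall_notMem_localSpectrum fun x => h x μ)

theorem spectrum_subset_of_localSpectrum_subset {F : Set ℂ} (h : ∀ x, localSpectrum T x ⊆ F)
    (heig : ∀ μ x, T x = μ • x → x ≠ 0 → μ ∈ F) : spectrum ℂ T ⊆ F := by
  intro μ hμ
  by_contra hμF
  refine hμ (mem_resolventSet_iff_bijective.2 ⟨?_, ?_⟩)
  · refine (injective_iff_map_eq_zero _).2 fun x hx => ?_
    by_contra hx0
    exact hμF (heig μ x (by simpa [sub_eq_zero] using hx) hx0)
  · exact surjective_of_forall_notMem_localSpectrum fun x hx => hμF (h x hx)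

/- Writing `g w = ∑ wⁿ Tⁿx = x + w T (g w)`, the local resolvent is `-z⁻¹ g (z⁻¹)`. -/
theorem mem_localResolventSet_of_isBigO_pow_apply {x : X} {q : ℝ} {μ : ℂ} (hq : 0 < q)
    (hx : (fun n => (T ^ n) x) =O[atTop] fun n => q ^ n) (hμ : q < ‖μ‖) :
    μ ∈ localResolventSet T x := by
  let g : ℂ → X := fun w => ∑' n, w ^ n • (T ^ n) x
  have hinv : ∀ z : ℂ, q < ‖z‖ → z ≠ 0 ∧ ‖z⁻¹‖ < q⁻¹ := fun z hz =>
    ⟨norm_pos_iff.1 (hq.trans hz), by rw [norm_inv]; exact inv_strictAnti₀ hq hz⟩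
  refine ⟨{z | q < ‖z‖}, isOpen_lt continuous_const continuous_norm, hμ,
    fun z => -(z⁻¹ • g z⁻¹), fun z hz => ?_, fun z hz => ?_⟩
  · obtain ⟨hz0, hzq⟩ := hinv z hz
    have hz_an := analyticAt_inv (𝕜 := ℂ) hz0
    exact (hz_an.smul
      ((analyticOnNhd_tsum_pow_smul_of_isBigO_pow hq hx _ hzq).comp hz_an)).neg
  · obtain ⟨hz0, hzq⟩ := hinv z hz
    have hsum := summable_pow_smul_of_isBigO_pow hq hx hzq
    have hg : g z⁻¹ = x + z⁻¹ • T (g z⁻¹) := by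
      simp only [g]
      rw [T.map_tsum hsum, ← (hsum.mapL T).tsum_const_smul, hsum.tsum_eq_zero_add]
      simp [pow_succ', smul_smul]
    simp only [map_neg, map_smul, sub_apply, smul_apply, one_apply_eq_self]
    rw [smul_sub, inv_smul_smul₀ hz0, neg_sub, sub_eq_iff_eq_add]
    exact hg

theorem mem_localResolventSet_of_backwardOrbit {y : ℕ → X} (hy : ∀ n, T (y (n + 1)) = y n)
    {q : ℝ} (hq : 0 < q) (hyq : y =O[atTop] fun n => q ^ n) {μ : ℂ} (hμ : ‖μ‖ < q⁻¹) (m : ℕ) :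
    μ ∈ localResolventSet T (y m) := by
  have hshift : (fun n => y (n + (m + 1))) =O[atTop] fun n => q ^ n := by
    refine (hyq.comp_tendsto (tendsto_add_atTop_nat (m + 1))).trans ?_
    simpa only [Function.comp_def, pow_add _ _ (m + 1), mul_comm] using
      isBigO_const_mul_self (q ^ (m + 1)) (fun n => q ^ n) atTop
  refine ⟨{z | ‖z‖ < q⁻¹}, isOpen_lt continuous_norm continuous_const, hμ,
    fun z => ∑' n, z ^ n • y (n + (m + 1)), analyticOnNhd_tsum_pow_smul_of_isBigO_pow hq hshift,
    fun z hz => ?_⟩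
  have hsum := summable_pow_smul_of_isBigO_pow hq hshift hz
  have hT : ∀ n, T (z ^ n • y (n + (m + 1))) = z ^ n • y (n + m) := fun n => by
    rw [map_smul, ← add_assoc, hy]
  have hsumT : Summable fun n => z ^ n • y (n + m) := by
    simpa only [hT] using hsum.mapL T
  simp only [sub_apply, smul_apply, one_apply_eq_self]
  rw [T.map_tsum hsum, ← hsum.tsum_const_smul]
  simp only [hT]
  rw [hsumT.tsum_eq_zero_add]
  simp [pow_succ', smul_smul, add_comm, add_left_comm]

end LocalSpectrum

section WeightedShift

/-- The products `ω m ⋯ ω (m + n - 1)`, which are `β_{m+n} / β_m` in the usual notation: `β_n` for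
`m = 0` and `1 / β_{-n}` for `m = -n`. -/
def weightProd (ω : ℤ → ℝ) (m : ℤ) (n : ℕ) : ℝ :=
  ∏ i ∈ Finset.range n, ω (m + i)

/-- The radius `r₃⁺ = limsup β_n^{1/n}` of the weighted shift with weights `ω`. -/
noncomputable def outerRadius (ω : ℤ → ℝ) : ℝ :=
  atTop.limsup fun n : ℕ => weightProd ω 0 n ^ (n : ℝ)⁻¹

/-- The radius `r₂⁻ = liminf (1 / β_{-n})^{1/n}` of the weighted shift with weights `ω`. -/
noncomputable def innerRadius (ω : ℤ → ℝ) : ℝ :=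
  atTop.liminf fun n : ℕ => weightProd ω (-n) n ^ (n : ℝ)⁻¹

/-- The closed annulus `r₂⁻ ≤ |μ| ≤ r₃⁺` containing the local spectra of finitely supported
vectors under the weighted shift with weights `ω`. -/
def weightAnnulus (ω : ℤ → ℝ) : Set ℂ :=
  {μ | innerRadius ω ≤ ‖μ‖ ∧ ‖μ‖ ≤ outerRadius ω}

/-- `S` is the bilateral weighted shift `e n ↦ ω n • e (n + 1)` along the unit vectors `e n`, with
positive weights `ω`. The vectors `e n` need not be orthogonal, nor span the space. -/
structure IsBilateralWeightedShift {X : Type*} [NormedAddCommGroup X] [NormedSpace ℂ X]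
    (S : X →L[ℂ] X) (e : ℤ → X) (ω : ℤ → ℝ) : Prop where
  norm_eq_one : ∀ n, ‖e n‖ = 1
  weight_pos : ∀ n, 0 < ω n
  apply_eq : ∀ n, S (e n) = (ω n : ℂ) • e (n + 1)

variable {ω : ℤ → ℝ}

theorem weightProd_pos (hω : ∀ n, 0 < ω n) (m : ℤ) (n : ℕ) : 0 < weightProd ω m n :=
  Finset.prod_pos fun _ _ => hω _

theorem weightProd_neg_self (ω : ℤ → ℝ) (n : ℕ) :
    weightProd ω (-n) n = ∏ i ∈ Finset.range n, ω (-(i : ℤ) - 1) := by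
  rw [weightProd, ← Finset.prod_range_reflect]
  refine Finset.prod_congr rfl fun i hi => ?_
  rw [Finset.mem_range] at hi
  congr 1
  omega

theorem weightProd_neg_succ (ω : ℤ → ℝ) (n : ℕ) :
    weightProd ω (-(n + 1 : ℕ)) (n + 1) = ω (-(n + 1 : ℕ)) * weightProd ω (-n) n := by
  rw [weightProd_neg_self, weightProd_neg_self, Finset.prod_range_succ, mul_comm]
  congr 2
  omega

theorem outerRadius_nonneg (hω : ∀ n, 0 < ω n) : 0 ≤ outerRadius ω :=
  Real.sInf_nonneg fun _ ha => by
    obtain ⟨n, hn⟩ := (eventually_map.1 ha).exists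
    exact (Real.rpow_nonneg (weightProd_pos hω 0 n).le _).trans hn

theorem innerRadius_nonneg (hω : ∀ n, 0 < ω n) : 0 ≤ innerRadius ω := by
  have hroot : ∀ᶠ n : ℕ in atTop, 0 ≤ weightProd ω (-n) n ^ (n : ℝ)⁻¹ :=
    .of_forall fun n => Real.rpow_nonneg (weightProd_pos hω (-n) n).le _
  exact Real.sSup_nonneg' ⟨0, hroot, le_rfl⟩

theorem isClosed_weightAnnulus (ω : ℤ → ℝ) : IsClosed (weightAnnulus ω) :=
  (isClosed_le continuous_const continuous_norm).inter
    (isClosed_le continuous_norm continuous_const)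

namespace IsBilateralWeightedShift

section Normed

variable {X : Type*} [NormedAddCommGroup X] [NormedSpace ℂ X] {S : X →L[ℂ] X} {e : ℤ → X}

theorem weight_ne_zero (hS : IsBilateralWeightedShift S e ω) (n : ℤ) : (ω n : ℂ) ≠ 0 :=
  Complex.ofReal_ne_zero.2 (hS.weight_pos n).ne'

theorem nontrivial (hS : IsBilateralWeightedShift S e ω) : Nontrivial X :=
  nontrivial_of_ne (e 0) 0 (norm_ne_zero_iff.1 (by rw [hS.norm_eq_one]; exact one_ne_zero))

theorem pow_apply (hS : IsBilateralWeightedShift S e ω) (m : ℤ) (n : ℕ) :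
    (S ^ n) (e m) = (weightProd ω m n : ℂ) • e (m + n) := by
  induction n with
  | zero => simp [weightProd]
  | succ n ih =>
    rw [pow_succ', mul_apply_eq_comp, ih, map_smul, hS.apply_eq, smul_smul, weightProd,
      weightProd, Finset.prod_range_succ, Complex.ofReal_mul, Nat.cast_succ, add_assoc]

theorem norm_pow_apply (hS : IsBilateralWeightedShift S e ω) (m : ℤ) (n : ℕ) :
    ‖(S ^ n) (e m)‖ = weightProd ω m n := by
  rw [hS.pow_apply, norm_smul, hS.norm_eq_one, mul_one,
    Complex.norm_of_nonneg (weightProd_pos hS.weight_pos m n).le]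

theorem inv_pow_apply {u : (X →L[ℂ] X)ˣ} (hS : IsBilateralWeightedShift ↑u e ω) (m : ℤ) (n : ℕ) :
    ((↑u⁻¹ : X →L[ℂ] X) ^ n) (e (m + n)) = (weightProd ω m n : ℂ)⁻¹ • e m := by
  rw [eq_inv_smul_iff₀ (Complex.ofReal_ne_zero.2 (weightProd_pos hS.weight_pos m n).ne'),
    ← map_smul, ← hS.pow_apply, ← mul_apply_eq_comp, ← Units.val_pow_eq_pow_val,
    ← Units.val_pow_eq_pow_val, inv_pow, Units.inv_mul, one_apply_eq_self]

theorem weightProd_le_norm_pow (hS : IsBilateralWeightedShift S e ω) (m : ℤ) (n : ℕ) :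
    weightProd ω m n ≤ ‖S ^ n‖ := by
  simpa only [hS.norm_pow_apply, hS.norm_eq_one, mul_one] using (S ^ n).le_opNorm (e m)

theorem isBoundedUnder_le_root_weightProd (hS : IsBilateralWeightedShift S e ω) (m : ℕ → ℤ) :
    IsBoundedUnder (· ≤ ·) atTop fun n : ℕ => weightProd ω (m n) n ^ (n : ℝ)⁻¹ := by
  have := hS.nontrivial
  refine isBoundedUnder_le_root_of_isBigO_pow (fun n => (weightProd_pos hS.weight_pos _ n).le)
    (norm_nonneg S) (IsBigO.of_norm_le fun n => ?_)
  rw [Real.norm_of_nonneg (weightProd_pos hS.weight_pos _ n).le]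
  exact (hS.weightProd_le_norm_pow (m n) n).trans (norm_pow_le S n)

theorem monotone_localResolventSet (hS : IsBilateralWeightedShift S e ω) :
    Monotone fun n => localResolventSet S (e n) :=
  monotone_int_of_le_succ fun n => by
    rw [← localResolventSet_smul (hS.weight_ne_zero n) (e (n + 1)), ← hS.apply_eq]
    exact localResolventSet_subset_of_commute (Commute.refl S) (e n)

theorem antitone_localResolventSet_diff_zero (hS : IsBilateralWeightedShift S e ω) :
    Antitone fun n => localResolventSet S (e n) \ {0} :=
  antitone_int_of_succ_le fun n => by
    rw [← localResolventSet_smul (hS.weight_ne_zero n) (e (n + 1)), ← hS.apply_eq]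
    exact Set.subset_sdiff.2 ⟨localResolventSet_apply_diff_zero_subset S (e n),
      Set.disjoint_sdiff_left⟩

theorem apply_inv_weightProd_smul (hS : IsBilateralWeightedShift S e ω) (n : ℕ) :
    S ((weightProd ω (-(n + 1 : ℕ)) (n + 1) : ℂ)⁻¹ • e (-(n + 1 : ℕ))) =
      (weightProd ω (-n) n : ℂ)⁻¹ • e (-n) := by
  have hindex : -((n + 1 : ℕ) : ℤ) + 1 = -n := by omega
  rw [map_smul, hS.apply_eq, hindex, smul_smul, weightProd_neg_succ, Complex.ofReal_mul, mul_inv,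
    mul_right_comm, inv_mul_cancel₀ (hS.weight_ne_zero _), one_mul]

theorem inv_le_innerRadius_of_isBigO_pow {u : (X →L[ℂ] X)ˣ}
    (hS : IsBilateralWeightedShift ↑u e ω) {t : ℝ} (ht : 0 < t)
    (h : (fun n => (↑u⁻¹ : X →L[ℂ] X) ^ n) =O[atTop] fun n => t ^ n) :
    t⁻¹ ≤ innerRadius ω := by
  have hW := fun n : ℕ => weightProd_pos hS.weight_pos (-n) n
  have hnorm : ∀ n : ℕ, ‖((↑u⁻¹ : X →L[ℂ] X) ^ n) (e 0)‖ = (weightProd ω (-n) n)⁻¹ := fun n => by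
    rw [← neg_add_cancel (n : ℤ), hS.inv_pow_apply, norm_smul, hS.norm_eq_one, mul_one, norm_inv,
      Complex.norm_of_nonneg (hW n).le]
  have hinv : (fun n : ℕ => (weightProd ω (-n) n)⁻¹) =O[atTop] fun n => t ^ n := by
    refine (IsBigO.of_norm_le fun n => ?_).trans h.norm_left
    rw [← hnorm, norm_norm]
    simpa only [hS.norm_eq_one, mul_one] using ((↑u⁻¹ : X →L[ℂ] X) ^ n).le_opNorm (e 0)
  refine le_liminf_root_of_pow_isBigO (fun n => (hW n).le) (inv_nonneg.2 ht.le)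
    (hS.isBoundedUnder_le_root_weightProd fun n => -n) ?_
  simpa only [inv_pow, inv_inv] using
    hinv.inv_rev (.of_forall fun n hn => absurd hn (inv_ne_zero (hW n).ne'))

variable [CompleteSpace X]

theorem mem_localResolventSet_of_outerRadius_lt (hS : IsBilateralWeightedShift S e ω) {μ : ℂ}
    (hμ : outerRadius ω < ‖μ‖) (n : ℤ) : μ ∈ localResolventSet S (e n) := by
  have hpos := outerRadius_nonneg hS.weight_pos
  obtain ⟨q, hq, hqμ⟩ := exists_between hμ
  have hgrowth : (fun n => (S ^ n) (e 0)) =O[atTop] fun n => q ^ n := by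
    rw [← isBigO_norm_left]
    simpa only [hS.norm_pow_apply] using
      isBigO_pow_of_limsup_root_lt (fun n => (weightProd_pos hS.weight_pos 0 n).le)
        (hS.isBoundedUnder_le_root_weightProd fun _ => 0) hq
  have hzero : μ ∈ localResolventSet S (e 0) :=
    mem_localResolventSet_of_isBigO_pow_apply (hpos.trans_lt hq) hgrowth hqμ
  rcases le_total 0 n with hn | hn
  · exact hS.monotone_localResolventSet hn hzero
  · exact (hS.antitone_localResolventSet_diff_zero hn
      ⟨hzero, norm_pos_iff.1 (hpos.trans_lt hμ)⟩).1

theorem mem_localResolventSet_of_lt_innerRadius (hS : IsBilateralWeightedShift S e ω) {μ : ℂ}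
    (hμ : ‖μ‖ < innerRadius ω) (n : ℤ) : μ ∈ localResolventSet S (e n) := by
  obtain ⟨q, hμq, hq⟩ := exists_between hμ
  have hq0 : 0 < q := (norm_nonneg μ).trans_lt hμq
  have hW := fun n : ℕ => weightProd_pos hS.weight_pos (-n) n
  have hgrowth : (fun n : ℕ => (weightProd ω (-n) n : ℂ)⁻¹ • e (-n)) =O[atTop]
      fun n => q⁻¹ ^ n := by
    refine IsBigO.trans (IsBigO.of_norm_le fun n => ?_)
      ((pow_isBigO_of_lt_liminf_root (fun n => (hW n).le) hq0.le hq).inv_rev ?_) |>.congr_right ?_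
    · rw [norm_smul, hS.norm_eq_one, mul_one, norm_inv, Complex.norm_of_nonneg (hW n).le]
    · exact .of_forall fun n hn => absurd hn (pow_ne_zero n hq0.ne')
    · exact fun n => (inv_pow q n).symm
  have hmem := mem_localResolventSet_of_backwardOrbit hS.apply_inv_weightProd_smul
    (inv_pos.2 hq0) hgrowth (by rwa [inv_inv]) n.natAbs
  rw [localResolventSet_smul
    (inv_ne_zero (Complex.ofReal_ne_zero.2 (hW n.natAbs).ne'))] at hmem
  exact hS.monotone_localResolventSet (by omega) hmem

theorem localSpectrum_subset_weightAnnulus (hS : IsBilateralWeightedShift S e ω) (n : ℤ) :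
    localSpectrum S (e n) ⊆ weightAnnulus ω := fun _ hμ =>
  ⟨le_of_not_gt fun h => hμ (hS.mem_localResolventSet_of_lt_innerRadius h n),
    le_of_not_gt fun h => hμ (hS.mem_localResolventSet_of_outerRadius_lt h n)⟩

theorem outerRadius_le_spectralRadius (hS : IsBilateralWeightedShift S e ω) :
    outerRadius ω ≤ (spectralRadius ℂ S).toReal := by
  refine le_of_forall_gt_imp_ge_of_dense fun t ht => ?_
  refine limsup_root_le_of_isBigO_pow (fun n => (weightProd_pos hS.weight_pos 0 n).le)
    (ENNReal.toReal_nonneg.trans ht.le)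
    (IsBigO.trans (IsBigO.of_norm_le fun n => ?_) (isBigO_pow_of_spectralRadius_lt ht).norm_left)
  rw [Real.norm_of_nonneg (weightProd_pos hS.weight_pos 0 n).le]
  exact hS.weightProd_le_norm_pow 0 n

theorem one_div_spectralRadius_inv_le {u : (X →L[ℂ] X)ˣ}
    (hS : IsBilateralWeightedShift ↑u e ω) :
    1 / (spectralRadius ℂ (↑u⁻¹ : X →L[ℂ] X)).toReal ≤ innerRadius ω := by
  by_contra! h
  obtain ⟨s, hs, hsρ⟩ := exists_between h
  have hs0 : 0 < s := (innerRadius_nonneg hS.weight_pos).trans_lt hs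
  rw [one_div] at hsρ
  have hρs : (spectralRadius ℂ (↑u⁻¹ : X →L[ℂ] X)).toReal < s⁻¹ :=
    (lt_inv_comm₀ hs0 (inv_pos.1 (hs0.trans hsρ))).1 hsρ
  refine hs.not_ge ?_
  simpa only [inv_inv] using hS.inv_le_innerRadius_of_isBigO_pow (inv_pos.2 hs0)
    (isBigO_pow_of_spectralRadius_lt hρs)

end Normed

section Hilbert

variable {E : Type*} [NormedAddCommGroup E] [InnerProductSpace ℂ E] {S : E →L[ℂ] E}
  {e : HilbertBasis ℤ ℂ E} {x : E} {μ : ℂ}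

theorem inner_pow_apply (hS : IsBilateralWeightedShift S e ω) (m : ℤ) (n : ℕ) (x : E) :
    inner ℂ (e (m + n)) ((S ^ n) x) = weightProd ω m n * inner ℂ (e m) x := by
  have hdense : Dense (Submodule.span ℂ (Set.range e) : Set E) :=
    Submodule.dense_iff_topologicalClosure_eq_top.2 e.dense_span
  have hext : innerSL ℂ (e (m + n)) ∘L (S ^ n) = (weightProd ω m n : ℂ) • innerSL ℂ (e m) := by
    refine ContinuousLinearMap.ext_on hdense ?_
    rintro _ ⟨k, rfl⟩
    simp only [ContinuousLinearMap.comp_apply, innerSL_apply_apply, smul_apply, hS.pow_apply,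
      inner_smul_right, orthonormal_iff_ite.1 e.orthonormal, smul_eq_mul, add_left_inj]
    split_ifs with hmk
    · rw [hmk]
    · rw [mul_zero, mul_zero]
  exact DFunLike.congr_fun hext x

theorem pow_mul_norm_inner_of_eigenvector (hS : IsBilateralWeightedShift S e ω)
    (hx : S x = μ • x) (m : ℤ) (n : ℕ) :
    ‖μ‖ ^ n * ‖inner ℂ (e (m + n)) x‖ = weightProd ω m n * ‖inner ℂ (e m) x‖ := by
  have hpow : (S ^ n) x = μ ^ n • x := by
    induction n with
    | zero => simp
    | succ n ih => rw [pow_succ, mul_apply_eq_comp, hx, map_smul, ih, smul_smul, pow_succ']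
  have hcoord := congrArg norm (hS.inner_pow_apply m n x)
  rwa [hpow, inner_smul_right, norm_mul, norm_mul, norm_pow,
    Complex.norm_of_nonneg (weightProd_pos hS.weight_pos m n).le] at hcoord

theorem norm_inner_zero_pos_of_eigenvector (hS : IsBilateralWeightedShift S e ω)
    (hx : S x = μ • x) (hx0 : x ≠ 0) : 0 < ‖inner ℂ (e 0) x‖ := by
  have hcoord := hS.pow_mul_norm_inner_of_eigenvector hx
  have hW := weightProd_pos hS.weight_pos
  obtain ⟨m, hm⟩ : ∃ m, 0 < ‖inner ℂ (e m) x‖ := by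
    by_contra! h
    refine hx0 (e.repr.injective (lp.ext (funext fun m => ?_)))
    simpa [e.repr_apply_apply] using h m
  have hμ : 0 < ‖μ‖ := by
    have h := hcoord m 1
    rw [pow_one] at h
    exact pos_of_mul_pos_left (h ▸ mul_pos (hW m 1) hm) (norm_nonneg _)
  obtain ⟨n, rfl | rfl⟩ := m.eq_nat_or_neg
  · have h := hcoord 0 n
    rw [zero_add] at h
    exact pos_of_mul_pos_right (h ▸ mul_pos (pow_pos hμ n) hm) (hW 0 n).le
  · have h := hcoord (-n) n
    rw [neg_add_cancel] at h
    exact pos_of_mul_pos_right (h ▸ mul_pos (hW (-n) n) hm) (pow_pos hμ n).le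

theorem norm_inner_le (hS : IsBilateralWeightedShift S e ω) (m : ℤ) (x : E) :
    ‖inner ℂ (e m) x‖ ≤ ‖x‖ := by
  simpa only [hS.norm_eq_one, one_mul] using norm_inner_le_norm (𝕜 := ℂ) (e m) x

theorem outerRadius_le_norm_of_eigenvector (hS : IsBilateralWeightedShift S e ω)
    (hx : S x = μ • x) (hx0 : x ≠ 0) : outerRadius ω ≤ ‖μ‖ := by
  have hc := hS.norm_inner_zero_pos_of_eigenvector hx hx0
  have hW := fun n => (weightProd_pos hS.weight_pos 0 n).le
  refine limsup_root_le_of_isBigO_pow hW (norm_nonneg μ)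
    (IsBigO.of_bound (‖x‖ / ‖inner ℂ (e 0) x‖) (.of_forall fun n => ?_))
  rw [Real.norm_of_nonneg (hW n), norm_pow, norm_norm, div_mul_eq_mul_div, le_div_iff₀ hc,
    ← hS.pow_mul_norm_inner_of_eigenvector hx, mul_comm]
  gcongr
  exact hS.norm_inner_le _ x

theorem norm_le_innerRadius_of_eigenvector (hS : IsBilateralWeightedShift S e ω)
    (hx : S x = μ • x) (hx0 : x ≠ 0) : ‖μ‖ ≤ innerRadius ω := by
  have hc := hS.norm_inner_zero_pos_of_eigenvector hx hx0
  have hW := fun n : ℕ => (weightProd_pos hS.weight_pos (-n) n).le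
  refine le_liminf_root_of_pow_isBigO hW (norm_nonneg μ)
    (hS.isBoundedUnder_le_root_weightProd fun n => -n)
    (IsBigO.of_bound (‖x‖ / ‖inner ℂ (e 0) x‖) (.of_forall fun n => ?_))
  have hcoord := hS.pow_mul_norm_inner_of_eigenvector hx (-n) n
  rw [neg_add_cancel] at hcoord
  rw [Real.norm_of_nonneg (hW n), norm_pow, norm_norm, div_mul_eq_mul_div, le_div_iff₀ hc,
    hcoord, mul_comm]
  exact mul_le_mul_of_nonneg_right (hS.norm_inner_le _ x) (hW n)

variable [CompleteSpace E]

theorem localSpectrum_subset_of_dunfordConditionC (hS : IsBilateralWeightedShift S e ω)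
    (hC : DunfordConditionC S) (x : E) : localSpectrum S x ⊆ weightAnnulus ω :=
  hC.localSpectrum_subset_of_span_dense (isClosed_weightAnnulus ω) e.dense_span
    (Set.forall_mem_range.2 hS.localSpectrum_subset_weightAnnulus) x

theorem innerRadius_le_outerRadius (hS : IsBilateralWeightedShift S e ω)
    (hC : DunfordConditionC S) : innerRadius ω ≤ outerRadius ω := by
  have := hS.nontrivial
  obtain ⟨x, μ, hμ⟩ := exists_mem_localSpectrum S
  obtain ⟨hinner, houter⟩ := hS.localSpectrum_subset_of_dunfordConditionC hC x hμ
  exact hinner.trans houter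

theorem spectrum_subset_weightAnnulus (hS : IsBilateralWeightedShift S e ω)
    (hC : DunfordConditionC S) : spectrum ℂ S ⊆ weightAnnulus ω := by
  have hle := hS.innerRadius_le_outerRadius hC
  refine spectrum_subset_of_localSpectrum_subset
    (hS.localSpectrum_subset_of_dunfordConditionC hC) fun μ x hx hx0 => ?_
  exact ⟨hle.trans (hS.outerRadius_le_norm_of_eigenvector hx hx0),
    (hS.norm_le_innerRadius_of_eigenvector hx hx0).trans hle⟩

end Hilbert

end IsBilateralWeightedShift

end WeightedShift

/-- If a bilateral weighted shift `S` with positive bounded weights satisfies Dunford's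
condition (C), then `r₂⁻(S) ≤ r₃⁺(S)`, the spectrum is contained in the annulus
`{λ : r₂⁻(S) ≤ |λ| ≤ r₃⁺(S)}`, hence `r₃⁺(S) = r(S)`; moreover if `S` is invertible then
`r₂⁻(S) = 1 / r(S⁻¹)`, and if `S` is not invertible then `r₂⁻(S) = 0`. -/
theorem bilateral_dunfordC (S : H →L[ℂ] H)
    (e : HilbertBasis ℤ ℂ H) (ω : ℤ → ℝ) (hpos : ∀ n, 0 < ω n)
    (hbd : ∃ M : ℝ, ∀ n, ω n ≤ M)
    (hS : ∀ n, S (e n) = (ω n : ℂ) • e (n + 1))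
    (hC : DunfordConditionC S)
    (r₂m r₃p : ℝ)
    (hr₂m : r₂m = atTop.liminf fun n : ℕ =>
      (∏ i ∈ Finset.range n, ω (-(i : ℤ) - 1)) ^ ((n : ℝ)⁻¹))
    (hr₃p : r₃p = atTop.limsup fun n : ℕ =>
      (∏ i ∈ Finset.range n, ω (i : ℤ)) ^ ((n : ℝ)⁻¹)) :
    r₂m ≤ r₃p ∧
    spectrum ℂ S ⊆ {μ : ℂ | r₂m ≤ ‖μ‖ ∧ ‖μ‖ ≤ r₃p} ∧
    r₃p = (spectralRadius ℂ S).toReal ∧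
    (IsUnit S → r₂m = 1 / (spectralRadius ℂ (Ring.inverse S)).toReal) ∧
    (¬ IsUnit S → r₂m = 0) := by
  have hshift : IsBilateralWeightedShift S e ω := ⟨e.orthonormal.norm_eq_one, hpos, hS⟩
  have := hshift.nontrivial
  obtain rfl : r₂m = innerRadius ω := by simp only [hr₂m, innerRadius, weightProd_neg_self]
  obtain rfl : r₃p = outerRadius ω := by simp only [hr₃p, outerRadius, weightProd, zero_add]
  have hspec := hshift.spectrum_subset_weightAnnulus hC
  refine ⟨hshift.innerRadius_le_outerRadius hC, hspec, ?_, ?_, fun hnot => ?_⟩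
  · exact hshift.outerRadius_le_spectralRadius.antisymm
      (spectralRadius_toReal_le (outerRadius_nonneg hpos) fun μ hμ => (hspec hμ).2)
  · rintro ⟨u, rfl⟩
    rw [Ring.inverse_unit]
    exact (le_one_div_spectralRadius_inv fun μ hμ => (hspec hμ).1).antisymm
      hshift.one_div_spectralRadius_inv_le
  · have hzero := (hspec ((spectrum.zero_mem_iff ℂ).2 hnot)).1
    rw [norm_zero] at hzero
    exact hzero.antisymm (innerRadius_nonneg hpos)
end
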